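/- arXiv:2308.07480 — 3 statements merged into one kernel-verified Lean document; each statement's English description precedes it below -/
import Mathlib

section
/- Let X be a real random variable and U a real random variable independent of X with E[U] = 0. Let l, s : ℝ → ℝ be measurable and define Y := l(X) + s(X)·U, with l(X), s(X)·U and Y integrable. If Y is independent of X, then l(X) = E[Y] almost surely; that is, the location function evaluated at X is almost surely constant. -/
open MeasureTheory ProbabilityTheory

/-- For an affine mechanism `Y = l(X) + s(X)·U` with `U` independent of
`X` and `E[U] = 0`, if `Y` is independent of `X` then the location term `l(X)` is almost
surely equal to the constant `E[Y]`. -/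
theorem location_const_of_indep
    {Ω : Type*} [MeasureSpace Ω] [IsProbabilityMeasure (ℙ : Measure Ω)]
    (X : Ω → ℝ) (U : Ω → ℝ)
    (hX : Measurable X) (hU : Measurable U)
    (hindepUX : IndepFun U X ℙ)
    (hUint : Integrable U ℙ)
    (hUmean : ∫ ω, U ω ∂ℙ = 0)
    (l s : ℝ → ℝ) (hl : Measurable l) (hs : Measurable s)
    (Y : Ω → ℝ) (hY : Y = fun ω => l (X ω) + s (X ω) * U ω)
    (hlint : Integrable (fun ω => l (X ω)) ℙ)
    (hsUint : Integrable (fun ω => s (X ω) * U ω) ℙ)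
    (hYint : Integrable Y ℙ)
    (hindepYX : IndepFun Y X ℙ) :
    (fun ω => l (X ω)) =ᵐ[ℙ] fun _ => ∫ ω, Y ω ∂ℙ := by
  have hm := hX.comap_le
  have hXm : Measurable[MeasurableSpace.comap X inferInstance] X := comap_measurable X
  have hYm : Measurable Y := by
    rw [hY]
    exact (hl.comp hX).add ((hs.comp hX).mul hU)
  have h1 := condExp_indep_eq hYm.comap_le hm
    (comap_measurable Y).stronglyMeasurable hindepYX
  have h2 := condExp_indep_eq hU.comap_le hm
    (comap_measurable U).stronglyMeasurable hindepUX
  have h3 := condExp_mul_of_stronglyMeasurable_left (μ := (ℙ : Measure Ω))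
    (f := fun ω => s (X ω)) (g := U) (hs.comp hXm).stronglyMeasurable hsUint hUint
  have h4 := condExp_of_stronglyMeasurable (μ := (ℙ : Measure Ω)) hm
    (f := fun ω => l (X ω)) (hl.comp hXm).stronglyMeasurable hlint
  have h5 := condExp_add hlint hsUint (MeasurableSpace.comap X inferInstance)
  have h6 : Y = (fun ω => l (X ω)) + (fun ω => s (X ω) * U ω) := hY
  have h7 : (fun ω => s (X ω)) * U = (fun ω => s (X ω) * U ω) := rfl
  rw [← h6, h4] at h5
  rw [h7] at h3
  filter_upwards [h1, h2, h3, h5] with ω a b c d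
  rw [Pi.add_apply, c, Pi.mul_apply, b, hUmean, mul_zero, add_zero] at d
  exact d.symm.trans a
end

section
/- (Currying lemma.) Let Y, U be random variables and Q, R random vectors, all with values in standard Borel spaces on a common probability space, such that U is independent of the triple (Y, Q, R). Let f be a measurable function of (y, q, u). Then for (law of (Q,R))-almost every (q, r), the regular conditional distribution of f(Y, Q, U) given (Q, R) = (q, r) equals the pushforward of the product measure (regular conditional distribution of Y given (Q,R) = (q,r)) ⊗ (law of U) under the map (y, u) ↦ f(y, q, u). -/
open MeasureTheory ProbabilityTheory

/-- **Currying lemma, Lemma 36 of Peters et al. 2014.** If `U` is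
independent of `(Y, Q, R)` and `f` is measurable, then for (law of `(Q,R)`)-almost every
`(q, r)`, the regular conditional distribution of `f(Y, Q, U)` given `(Q, R) = (q, r)`
is the pushforward of (cond. distribution of `Y` given `(Q,R) = (q,r)`) ⊗ (law of `U`)
under `(y, u) ↦ f (y, q, u)`. -/
theorem condDistrib_curry_of_indep
    {Ω : Type*} [MeasureSpace Ω] [IsProbabilityMeasure (ℙ : Measure Ω)]
    {𝒴 𝒬 ℛ 𝒰 : Type*}
    [MeasurableSpace 𝒴] [StandardBorelSpace 𝒴] [Nonempty 𝒴]
    [MeasurableSpace 𝒬] [StandardBorelSpace 𝒬]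
    [MeasurableSpace ℛ] [StandardBorelSpace ℛ]
    [MeasurableSpace 𝒰] [StandardBorelSpace 𝒰] [Nonempty 𝒰]
    (Y : Ω → 𝒴) (Q : Ω → 𝒬) (R : Ω → ℛ) (U : Ω → 𝒰)
    (hY : Measurable Y) (hQ : Measurable Q) (hR : Measurable R) (hU : Measurable U)
    (hindep : IndepFun U (fun ω => (Y ω, Q ω, R ω)) ℙ)
    (f : 𝒴 × 𝒬 × 𝒰 → ℝ) (hf : Measurable f) :
    ∀ᵐ qr ∂(Measure.map (fun ω => (Q ω, R ω)) ℙ),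
      condDistrib (fun ω => f (Y ω, Q ω, U ω)) (fun ω => (Q ω, R ω)) ℙ qr
        = Measure.map (fun yu : 𝒴 × 𝒰 => f (yu.1, qr.1, yu.2))
            ((condDistrib Y (fun ω => (Q ω, R ω)) ℙ qr).prod (Measure.map U ℙ)) := by
  have hX : Measurable (fun ω => (Q ω, R ω)) := hQ.prodMk hR
  have : IsProbabilityMeasure (Measure.map U ℙ) :=
    Measure.isProbabilityMeasure_map hU.aemeasurable
  have : IsProbabilityMeasure (Measure.map (fun ω => (Q ω, R ω)) ℙ) :=
    Measure.isProbabilityMeasure_map hX.aemeasurable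
  let g : (𝒬 × ℛ) × (𝒴 × 𝒰) → ℝ := fun z => f (z.2.1, z.1.1, z.2.2)
  have hg : Measurable g := by
    apply hf.comp
    fun_prop
  let κ : Kernel (𝒬 × ℛ) ℝ :=
    (Kernel.id ×ₖ (condDistrib Y (fun ω => (Q ω, R ω)) ℙ ×ₖ
      Kernel.const (𝒬 × ℛ) (Measure.map U ℙ))).map g
  have : IsMarkovKernel κ := Kernel.IsMarkovKernel.map _ hg
  have hκ : ∀ qr, κ qr = Measure.map (fun yu : 𝒴 × 𝒰 => f (yu.1, qr.1, yu.2))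
            ((condDistrib Y (fun ω => (Q ω, R ω)) ℙ qr).prod (Measure.map U ℙ)) := by
    intro qr
    simp only [κ]
    rw [Kernel.map_apply _ hg, Kernel.prod_apply, Kernel.prod_apply, Kernel.id_apply,
      Kernel.const_apply, Measure.dirac_prod, Measure.map_map hg (by fun_prop)]
    rfl
  have hfm : Measurable (fun ω => f (Y ω, Q ω, U ω)) :=
    hf.comp (hY.prodMk (hQ.prodMk hU))
  have key := condDistrib_ae_eq_of_measure_eq_compProd (μ := (ℙ : Measure Ω))
    (fun ω => (Q ω, R ω)) (Y := fun ω => f (Y ω, Q ω, U ω)) hfm.aemeasurable (κ := κ) ?_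
  · filter_upwards [key] with qr h
    rw [h, hκ]
  · refine Measure.ext_of_lintegral _ fun φ hφ => ?_
    have hF : Measurable (fun z : 𝒰 × 𝒴 × 𝒬 × ℛ => φ (z.2.2, f (z.2.1, z.2.2.1, z.1))) :=
      hφ.comp (Measurable.prodMk (by fun_prop) (hf.comp (by fun_prop)))
    have hH : Measurable (fun w : 𝒴 × 𝒬 × ℛ =>
        ∫⁻ u, φ (w.2, f (w.1, w.2.1, u)) ∂(Measure.map U ℙ)) :=
      hF.lintegral_prod_left'
    have hH' : Measurable (fun w : (𝒬 × ℛ) × 𝒴 =>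
        ∫⁻ u, φ (w.1, f (w.2, w.1.1, u)) ∂(Measure.map U ℙ)) :=
      hH.comp measurable_swap
    have hT : Measurable (fun ω => (Y ω, Q ω, R ω)) := hY.prodMk hX
    have hjoint := (indepFun_iff_map_prod_eq_prod_map_map hU.aemeasurable hT.aemeasurable).1 hindep
    have : IsProbabilityMeasure (Measure.map (fun ω => (Y ω, Q ω, R ω)) ℙ) :=
      Measure.isProbabilityMeasure_map hT.aemeasurable
    rw [lintegral_map hφ (hX.prodMk hfm), Measure.lintegral_compProd hφ]
    calc ∫⁻ ω, φ ((Q ω, R ω), f (Y ω, Q ω, U ω)) ∂ℙ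
        = ∫⁻ z, φ (z.2.2, f (z.2.1, z.2.2.1, z.1))
            ∂(Measure.map (fun ω => (U ω, (Y ω, Q ω, R ω))) ℙ) :=
          (lintegral_map hF (hU.prodMk hT)).symm
      _ = ∫⁻ w, ∫⁻ u, φ (w.2, f (w.1, w.2.1, u)) ∂(Measure.map U ℙ)
            ∂(Measure.map (fun ω => (Y ω, Q ω, R ω)) ℙ) := by
          rw [hjoint, lintegral_prod_symm' _ hF]
      _ = ∫⁻ w, ∫⁻ u, φ (w.1, f (w.2, w.1.1, u)) ∂(Measure.map U ℙ)
            ∂(Measure.map (fun ω => ((Q ω, R ω), Y ω)) ℙ) := by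
          rw [lintegral_map hH hT, lintegral_map hH' (hX.prodMk hY)]
      _ = _ := by
          rw [← compProd_map_condDistrib hY.aemeasurable, Measure.lintegral_compProd hH']
          refine lintegral_congr fun x => ?_
          have hfx : Measurable (fun yu : 𝒴 × 𝒰 => f (yu.1, x.1, yu.2)) := hf.comp (by fun_prop)
          have hφx : Measurable (fun t : ℝ => φ (x, t)) := hφ.comp (by fun_prop)
          rw [hκ, lintegral_map hφx hfx]
          exact (lintegral_prod _ (hφx.comp hfx).aemeasurable).symm
end

section
/- Let W be an ℝ^k-valued random variable, X a real random variable, and U a real random variable independent of the pair (W, X) with E[U] = 0. Let l, s : ℝ^k × ℝ → ℝ be measurable, define Y := l(W, X) + s(W, X)·U, and assume l(W,X), s(W,X)·U and Y are integrable. If Y is conditionally independent of X given σ(W), then l(W, X) = E[Y ∣ σ(W)] almost surely; in particular l(W, X) is almost surely equal to a σ(W)-measurable random variable, i.e., the location term does not depend on X up to a null set. -/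
open MeasureTheory ProbabilityTheory

/-- For an LSNM mechanism `Y = l(W,X) + s(W,X)·U` with `U` independent
of the pair `(W, X)` and `E[U] = 0`: if `Y` is conditionally independent of `X` given
`σ(W)`, then `l(W, X) = E[Y | σ(W)]` almost surely, so the location term is almost surely
equal to a `σ(W)`-measurable random variable. -/
theorem location_condexp_of_condIndep
    {Ω : Type*} [MeasureSpace Ω] [StandardBorelSpace Ω]
    [IsProbabilityMeasure (ℙ : Measure Ω)]
    {k : ℕ} (W : Ω → (Fin k → ℝ)) (X : Ω → ℝ) (U : Ω → ℝ)
    (hW : Measurable W) (hX : Measurable X) (hU : Measurable U)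
    (hindepU : IndepFun U (fun ω => (W ω, X ω)) ℙ)
    (hUint : Integrable U ℙ)
    (hUmean : ∫ ω, U ω ∂ℙ = 0)
    (l s : (Fin k → ℝ) × ℝ → ℝ) (hl : Measurable l) (hs : Measurable s)
    (Y : Ω → ℝ) (hY : Y = fun ω => l (W ω, X ω) + s (W ω, X ω) * U ω)
    (hlint : Integrable (fun ω => l (W ω, X ω)) ℙ)
    (hsUint : Integrable (fun ω => s (W ω, X ω) * U ω) ℙ)
    (hYint : Integrable Y ℙ)
    (hcondIndep : CondIndepFun (MeasurableSpace.comap W inferInstance) hW.comap_le Y X ℙ) :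
    (fun ω => l (W ω, X ω)) =ᵐ[ℙ] ℙ[Y | MeasurableSpace.comap W inferInstance] := by
  have hYm : Measurable Y := by rw [hY]; fun_prop
  have hV : Measurable (fun ω => (W ω, X ω)) := hW.prodMk hX
  -- conditioning on the pair is the same as conditioning on `W`
  have h1 := condExp_ae_eq_integral_condDistrib' (μ := (ℙ : Measure Ω)) hW hYint
  have h2 := condExp_ae_eq_integral_condDistrib' (μ := (ℙ : Measure Ω)) hV hYint
  have h3 := ae_of_ae_map hV.aemeasurable
    ((condIndepFun_iff_condDistrib_prod_ae_eq_prodMkRight hYm hX hW).1 hcondIndep.symm)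
  -- the conditional mean given the pair is the location term
  set m := MeasurableSpace.comap (fun ω => (W ω, X ω)) inferInstance with hm
  have hVm : Measurable[m] (fun ω => (W ω, X ω)) := comap_measurable _
  have hls : StronglyMeasurable[m] (fun ω => l (W ω, X ω)) :=
    (hl.comp hVm).stronglyMeasurable
  have hss : StronglyMeasurable[m] (fun ω => s (W ω, X ω)) :=
    (hs.comp hVm).stronglyMeasurable
  have hU0 : ℙ[U | m] =ᵐ[ℙ] fun _ => ∫ ω, U ω ∂ℙ :=
    condExp_indep_eq hU.comap_le hV.comap_le
      (comap_measurable U).stronglyMeasurable hindepU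
  have h4 : ℙ[(fun ω => s (W ω, X ω)) * U | m] =ᵐ[ℙ] (fun ω => s (W ω, X ω)) * ℙ[U | m] :=
    condExp_mul_of_stronglyMeasurable_left hss hsUint hUint
  have h5 : ℙ[(fun ω => l (W ω, X ω)) + (fun ω => s (W ω, X ω)) * U | m] =ᵐ[ℙ]
      ℙ[(fun ω => l (W ω, X ω)) | m] + ℙ[(fun ω => s (W ω, X ω)) * U | m] :=
    condExp_add hlint hsUint m
  have h6 : ℙ[(fun ω => l (W ω, X ω)) | m] = (fun ω => l (W ω, X ω)) :=
    condExp_of_stronglyMeasurable hV.comap_le hls hlint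
  have hY2 : Y = (fun ω => l (W ω, X ω)) + (fun ω => s (W ω, X ω)) * U := hY
  rw [h6, ← hY2] at h5
  filter_upwards [h1, h2, h3, hU0, h4, h5] with ω a1 a2 a3 a4 a5 a6
  rw [a1]
  rw [a3, Kernel.prodMkRight_apply] at a2
  rw [← a2, a6, Pi.add_apply, a5, Pi.mul_apply, a4, hUmean, mul_zero, add_zero]
end
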